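/- Let A be a k-algebra, σ a k-algebra automorphism of A, δ a σ-derivation, E = A[x;σ,δ], and let ψ'_n: E ⊗ A^{⊗n} ⊗ ^{σ⁻¹}E → E ⊗ A^{⊗n} ⊗ E be the E-E-bilinear chain maps between the two bar-type complexes with differentials b'_{1} and b'_{0}, given by ψ'_n(1⊗a_1⊗…⊗a_n⊗1) = x⊗σ⁻¹(a_1)⊗…⊗σ⁻¹(a_n)⊗1 − 1⊗a_1⊗…⊗a_n⊗x − Σ_{j=1}^{n} 1⊗a_1⊗…⊗a_{j−1}⊗δσ⁻¹(a_j)⊗σ⁻¹(a_{j+1})⊗…⊗σ⁻¹(a_n)⊗1. Form the mapping cone complex C with C_0 = E ⊗ E, C_n = (E ⊗ A^{⊗(n−1)} ⊗ ^{σ⁻¹}E) ⊕ (E ⊗ A^{⊗n} ⊗ E) for n ≥ 1, and differential d_n(p, p') = (−b'_{1,n−1}(p), b'_{0,n}(p') − ψ'_{n−1}(p)). Then the augmented complex C → E → 0, with augmentation the multiplication μ: E ⊗ E → E, is exact. If, moreover, A is projective as a k-module, then this augmented complex is a resolution of E by projective E ⊗_k E^op-modules. -/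

import Mathlib

open scoped TensorProduct
open CategoryTheory

noncomputable section
set_option synthInstance.maxHeartbeats 1000000
set_option maxHeartbeats 1000000

/-- `E` is an Ore extension `A[x; σ, δ]` of `A` (with `σ` an automorphism): `A` embeds in `E`
via `ι`, the powers of `x` form a basis of `E` as a left `A`-module, `x a = σ(a) x + δ(a)`,
and `δ` is a `σ`-derivation. -/
structure IsOreExtension (k : Type) [CommRing k] (A : Type) [Ring A] [Algebra k A]
    (E : Type) [Ring E] [Algebra k E] (σ : A ≃ₐ[k] A) (δ : A →ₗ[k] A)
    (ι : A →ₐ[k] E) (x : E) : Prop where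
  isDerivation : ∀ a b : A, δ (a * b) = δ a * b + σ a * δ b
  commRule : ∀ a : A, x * ι a = ι (σ a) * x + ι (δ a)
  spans : ∀ e : E, ∃ c : ℕ →₀ A, e = c.sum fun i a => ι a * x ^ i
  indep : ∀ c : ℕ →₀ A, (c.sum fun i a => ι a * x ^ i) = 0 → c = 0

section Bar

/-- Merging of two adjacent entries of a tuple: `(a_0, …, a_n) ↦
(a_0, …, a_{i-1}, a_i * a_{i+1}, a_{i+2}, …, a_n)`. -/
def mergeAt {A : Type} [Mul A] {n : ℕ} (a : Fin (n + 1) → A) (i : Fin n) : Fin n → A :=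
  fun j =>
    if (j : ℕ) < (i : ℕ) then a (Fin.castSucc j)
    else if (j : ℕ) = (i : ℕ) then a (Fin.castSucc j) * a (Fin.succ j)
    else a (Fin.succ j)

variable (k : Type) [CommRing k] (A : Type) [Ring A] [Algebra k A]
  (E : Type) [Ring E] [Algebra k E]

/-- The `n`-th term `E ⊗ A^{⊗n} ⊗ E` of the bar-type complexes. -/
abbrev BarObj (n : ℕ) : Type := (E ⊗[k] TensorPower k n A) ⊗[k] E

end Bar
section Triple

variable (k : Type) [CommRing k] (E : Type) [Ring E] [Algebra k E]
  (X : Type) [AddCommGroup X] [Module k X]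

/-- Left multiplication by elements of `E` on the first factor of `(E ⊗ X) ⊗ E`. -/
def lAlgHom : E →ₐ[k] Module.End k ((E ⊗[k] X) ⊗[k] E) :=
  AlgHom.mk'
    { toFun := fun e => ((LinearMap.mulLeft k e).rTensor X).rTensor E
      map_one' := by ext t u; simp
      map_mul' := fun e f => by ext t u; simp [mul_assoc]
      map_zero' := by ext t u; simp
      map_add' := fun e f => by ext t u; simp [add_mul, TensorProduct.add_tmul] }
    (fun c e => by ext t u; simp [smul_mul_assoc, TensorProduct.smul_tmul'])

/-- Right multiplication by elements of `E` on the last factor of `(E ⊗ X) ⊗ E`. -/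
def rAlgHom : Eᵐᵒᵖ →ₐ[k] Module.End k ((E ⊗[k] X) ⊗[k] E) :=
  AlgHom.mk'
    { toFun := fun z => (LinearMap.mulRight k z.unop).lTensor (E ⊗[k] X)
      map_one' := by ext t u; simp
      map_mul' := fun z w => by ext t u; simp [mul_assoc]
      map_zero' := by ext t u; simp
      map_add' := fun z w => by ext t u; simp [mul_add, TensorProduct.tmul_add] }
    (fun c z => by ext t u; simp [mul_smul_comm, TensorProduct.tmul_smul])

/-- The outer `E^e = E ⊗ Eᵐᵒᵖ`-module structure on `(E ⊗ X) ⊗ E`: the first factor is acted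
on by left multiplication and the last factor by right multiplication. -/
def tripleModule : Module (E ⊗[k] Eᵐᵒᵖ) ((E ⊗[k] X) ⊗[k] E) :=
  Module.compHom _
    (Algebra.TensorProduct.lift (lAlgHom k E X) (rAlgHom k E X)
      (fun e z => by
        ext t u
        simp [lAlgHom, rAlgHom])).toRingHom

end Triple
section Helpers

variable {k : Type} [CommRing k] {A : Type} [Ring A] [Algebra k A]
  {E : Type} [Ring E] [Algebra k E]

/-- Shortcut instance. -/
@[reducible] def barG (k : Type) [CommRing k] (A : Type) [Ring A] [Algebra k A]
  (E : Type) [Ring E] [Algebra k E] (n : ℕ) : AddCommGroup (BarObj k A E n) :=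
  @TensorProduct.addCommGroup k _ (E ⊗[k] TensorPower k n A) E
    (TensorProduct.addCommGroup) _ _ _

local instance (priority := 100000) barG' (n : ℕ) : AddCommGroup (BarObj k A E n) := barG k A E n
local instance (priority := 100000) barAG (n : ℕ) : AddGroup (BarObj k A E n) :=
  (barG k A E n).toAddGroup
local instance (priority := 100000) barSNM (n : ℕ) : SubNegMonoid (BarObj k A E n) :=
  (barG k A E n).toAddGroup.toSubNegMonoid
local instance (priority := 100000) barNeg (n : ℕ) : Neg (BarObj k A E n) :=
  (barG k A E n).toAddGroup.toSubNegMonoid.toNeg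
local instance (priority := 100000) barSub (n : ℕ) : Sub (BarObj k A E n) :=
  (barG k A E n).toAddGroup.toSubNegMonoid.toSub
local instance (priority := 100000) barZ (n : ℕ) : Module ℤ (BarObj k A E n) :=
  @AddCommGroup.toIntModule _ (barG k A E n)
local instance (priority := 100000) barZS (n : ℕ) : SMul ℤ (BarObj k A E n) :=
  (@AddCommGroup.toIntModule _ (barG k A E n)).toSMul
local instance (priority := 100000) barC (n : ℕ) : IsRightCancelAdd (BarObj k A E n) :=
  @AddRightCancelSemigroup.toIsRightCancelAdd _ (@AddRightCancelMonoid.toAddRightCancelSemigroup _ (@AddCancelMonoid.toAddRightCancelMonoid _ (@AddGroup.toAddCancelMonoid _ (barG k A E n).toAddGroup)))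

/-- Pure tensors. -/
def pt (k : Type) [CommRing k] {A : Type} [Ring A] [Algebra k A]
    {E : Type} [Ring E] [Algebra k E] {n : ℕ} (e : E) (a : Fin n → A) (f : E) : BarObj k A E n :=
  (e ⊗ₜ[k] PiTensorProduct.tprod k a) ⊗ₜ[k] f

lemma pt_add_right {n : ℕ} (e : E) (a : Fin n → A) (f g : E) :
    pt k e a (f + g) = pt k e a f + pt k e a g := TensorProduct.tmul_add _ _ _

/-- Appending an element at the end of a tensor. -/
def snocT (k : Type) [CommRing k] (A : Type) [Ring A] [Algebra k A] (n : ℕ) :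
    TensorPower k n A ⊗[k] A →ₗ[k] TensorPower k (n + 1) A :=
  (TensorPower.mulEquiv (R := k) (M := A) (n := n) (m := 1)).toLinearMap ∘ₗ
    (LinearMap.lTensor _ (PiTensorProduct.subsingletonEquiv (R := k) (s := fun _ => A)
      (0 : Fin 1)).symm.toLinearMap)

lemma snocT_apply (n : ℕ) (a : Fin n → A) (b : A) :
    snocT k A n (PiTensorProduct.tprod k a ⊗ₜ[k] b) =
      PiTensorProduct.tprod k (Fin.snoc (α := fun _ => A) a b) := by
  have h := TensorPower.tprod_mul_tprod k a (fun _ : Fin 1 => b)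
  rw [Fin.append_right_eq_snoc] at h
  rw [← h]
  simp only [snocT, LinearMap.comp_apply, LinearMap.lTensor_tmul, LinearEquiv.coe_coe,
    PiTensorProduct.subsingletonEquiv_symm_apply']
  rfl

/-- Appending an element at the end, with a coefficient in `E`. -/
def snocMap (k : Type) [CommRing k] (A : Type) [Ring A] [Algebra k A]
    (E : Type) [Ring E] [Algebra k E] (n : ℕ) :
    (E ⊗[k] TensorPower k n A) →ₗ[k] A →ₗ[k] (E ⊗[k] TensorPower k (n + 1) A) :=
  TensorProduct.curry ((LinearMap.lTensor E (snocT k A n)) ∘ₗ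
    (TensorProduct.assoc k E (TensorPower k n A) A).toLinearMap)

lemma snocMap_apply (n : ℕ) (e : E) (a : Fin n → A) (b : A) :
    snocMap k A E n (e ⊗ₜ[k] PiTensorProduct.tprod k a) b =
      e ⊗ₜ[k] PiTensorProduct.tprod k (Fin.snoc (α := fun _ => A) a b) := by
  simp [snocMap, snocT_apply]

/-- The homotopy. -/
def htp (coef : E →ₗ[k] ℕ →₀ A) (x : E) (τ : A ≃ₐ[k] A) (n : ℕ) :
    BarObj k A E n →ₗ[k] BarObj k A E (n + 1) :=
  TensorProduct.lift (LinearMap.flip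
    ((Finsupp.lsum k (fun i : ℕ =>
      (LinearMap.llcomp k (E ⊗[k] TensorPower k n A) (E ⊗[k] TensorPower k (n + 1) A)
        (BarObj k A E (n + 1))
        ((TensorProduct.mk k (E ⊗[k] TensorPower k (n + 1) A) E).flip (x ^ i))) ∘ₗ
      (snocMap k A E n).flip ∘ₗ τ.toLinearMap)) ∘ₗ coef))

lemma htp_apply (coef : E →ₗ[k] ℕ →₀ A) (ι : A →ₐ[k] E) (x : E) (τ : A ≃ₐ[k] A)
    (hc : ∀ b i, coef (ι b * x ^ i) = Finsupp.single i b)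
    (n : ℕ) (e : E) (a : Fin n → A) (b : A) (i : ℕ) :
    htp coef x τ n (pt k e a (ι b * x ^ i)) =
      pt k e (Fin.snoc (α := fun _ => A) a (τ b)) (x ^ i) := by
  simp [htp, pt, hc, snocMap_apply]

/-- The augmentation. -/
def aug (coef : E →ₗ[k] ℕ →₀ A) (ι : A →ₐ[k] E) (τ : A ≃ₐ[k] A) :
    BarObj k A E 0 →ₗ[k] (ℕ →₀ E) :=
  TensorProduct.lift (LinearMap.flip
    ((Finsupp.lsum k (fun i : ℕ =>
      (LinearMap.llcomp k (E ⊗[k] TensorPower k 0 A) E (ℕ →₀ E)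
        (Finsupp.lsingle i)) ∘ₗ
      (LinearMap.lcomp k E ((TensorProduct.rid k E).toLinearMap ∘ₗ
        LinearMap.lTensor E (PiTensorProduct.isEmptyEquiv (R := k) (s := fun _ => A)
          (Fin 0)).toLinearMap)) ∘ₗ
      (LinearMap.mul k E).flip ∘ₗ ι.toLinearMap ∘ₗ τ.toLinearMap)) ∘ₗ coef))

lemma aug_apply (coef : E →ₗ[k] ℕ →₀ A) (ι : A →ₐ[k] E) (x : E) (τ : A ≃ₐ[k] A)
    (hc : ∀ b i, coef (ι b * x ^ i) = Finsupp.single i b)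
    (e : E) (a : Fin 0 → A) (b : A) (i : ℕ) :
    aug coef ι τ (pt k e a (ι b * x ^ i)) = Finsupp.single i (e * ι (τ b)) := by
  simp [aug, pt, hc]

/-- The section of the augmentation. -/
def sec (k : Type) [CommRing k] (A : Type) [Ring A] [Algebra k A]
    {E : Type} [Ring E] [Algebra k E] (x : E) : (ℕ →₀ E) →ₗ[k] BarObj k A E 0 :=
  Finsupp.lsum k (fun i : ℕ =>
    (TensorProduct.mk k (E ⊗[k] TensorPower k 0 A) E).flip (x ^ i) ∘ₗ
    (TensorProduct.mk k E (TensorPower k 0 A)).flip (PiTensorProduct.tprod k Fin.elim0))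

lemma sec_single (x : E) (i : ℕ) (e : E) (a : Fin 0 → A) :
    sec k A x (Finsupp.single i e) = pt k e a (x ^ i) := by
  rw [Subsingleton.elim a Fin.elim0]
  simp [sec, pt]

/-- The map induced by `Ψ` on the augmentation level. -/
def psiM (k : Type) [CommRing k] {E : Type} [Ring E] [Algebra k E] (x : E) :
    (ℕ →₀ E) →ₗ[k] (ℕ →₀ E) :=
  Finsupp.lsum k (fun i : ℕ =>
    Finsupp.lsingle i ∘ₗ LinearMap.mulRight k x - Finsupp.lsingle (i + 1))

lemma psiM_single (x : E) (i : ℕ) (e : E) :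
    psiM k x (Finsupp.single i e) = Finsupp.single i (e * x) - Finsupp.single (i + 1) e := by
  simp [psiM]

lemma bar_ext {N : Type} [AddCommMonoid N] [Module k N] {n : ℕ} (F G : BarObj k A E n →ₗ[k] N)
    (h : ∀ e a f, F (pt k e a f) = G (pt k e a f)) : F = G := by
  apply TensorProduct.ext'
  intro w f
  induction w using TensorProduct.induction_on with
  | zero => simp
  | add u v hu hv => rw [TensorProduct.add_tmul, map_add, map_add, hu, hv]
  | tmul e t =>
    induction t using PiTensorProduct.induction_on with
    | smul_tprod r a =>
      have := h e a f
      rw [TensorProduct.tmul_smul, ← TensorProduct.smul_tmul', map_smul, map_smul]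
      exact congrArg (r • ·) this
    | add u v hu hv => rw [TensorProduct.tmul_add, TensorProduct.add_tmul, map_add, map_add, hu, hv]

lemma bar_ext_ore {σ : A ≃ₐ[k] A} {δ : A →ₗ[k] A} {ι : A →ₐ[k] E} {x : E}
    (hOre : IsOreExtension k A E σ δ ι x)
    {N : Type} [AddCommMonoid N] [Module k N] {n : ℕ} (F G : BarObj k A E n →ₗ[k] N)
    (h : ∀ e a b i, F (pt k e a (ι b * x ^ i)) = G (pt k e a (ι b * x ^ i))) : F = G := by
  apply bar_ext
  intro e a f
  obtain ⟨c, rfl⟩ := hOre.spans f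
  have hp : pt k e a (c.sum fun i a => ι a * x ^ i) =
      ∑ i ∈ c.support, pt k e a (ι (c i) * x ^ i) := by
    simp only [pt, Finsupp.sum, TensorProduct.tmul_sum]
  rw [hp, map_sum, map_sum]
  exact Finset.sum_congr rfl fun i _ => h _ _ _ _

/-- Right multiplication. -/
def rmul (k : Type) [CommRing k] (A : Type) [Ring A] [Algebra k A]
    {E : Type} [Ring E] [Algebra k E] (n : ℕ) (f : E) : BarObj k A E n →ₗ[k] BarObj k A E n :=
  LinearMap.lTensor _ (LinearMap.mulRight k f)

lemma rmul_pt (n : ℕ) (e : E) (a : Fin n → A) (f g : E) :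
    rmul k A n g (pt k e a f) = pt k e a (f * g) := by
  simp [rmul, pt]

/-- If a right-linear map is killed by the homotopy then it vanishes. -/
lemma eq_of_comp_htp (coef : E →ₗ[k] ℕ →₀ A) (ι : A →ₐ[k] E) (x : E) (τ : A ≃ₐ[k] A)
    (hc : ∀ b i, coef (ι b * x ^ i) = Finsupp.single i b)
    {n m : ℕ} (F G : BarObj k A E (n + 1) →ₗ[k] BarObj k A E m)
    (hF : ∀ f p, F (rmul k A _ f p) = rmul k A _ f (F p))
    (hG : ∀ f p, G (rmul k A _ f p) = rmul k A _ f (G p))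
    (h : ∀ p, F (htp coef x τ n p) = G (htp coef x τ n p)) : F = G := by
  apply bar_ext
  intro e a f
  have h1 := h (pt k e (Fin.init a) (ι (τ.symm (a (Fin.last n))) * x ^ 0))
  rw [htp_apply coef ι x τ hc] at h1
  simp only [AlgEquiv.apply_symm_apply, Fin.snoc_init_self, pow_zero] at h1
  have h2 : pt k e a f = rmul k A _ f (pt k e a 1) := by rw [rmul_pt, one_mul]
  rw [h2, hF, hG, h1]

section twisted

variable (coef : E →ₗ[k] ℕ →₀ A) (ι : A →ₐ[k] E) (x : E) (τ : A ≃ₐ[k] A)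

/-- The formula defining the (twisted) bar differential. -/
def IsBar (B : (n : ℕ) → (BarObj k A E (n + 1) →ₗ[k] BarObj k A E n)) : Prop :=
  ∀ (n : ℕ) (e f : E) (a : Fin (n + 1) → A),
      B n (pt k e a f) =
        pt k (e * ι (a 0)) (fun j : Fin n => a j.succ) f
        + ∑ i : Fin n, ((-1 : ℤ) ^ ((i : ℕ) + 1)) • pt k e (mergeAt a i) f
        + ((-1 : ℤ) ^ (n + 1)) • pt k e (fun j : Fin n => a j.castSucc)
              (ι (τ.symm (a (Fin.last n))) * f)

variable {B : (n : ℕ) → (BarObj k A E (n + 1) →ₗ[k] BarObj k A E n)}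

lemma bar_rmul (hB : IsBar ι τ B) (n : ℕ) (f : E) (p : BarObj k A E (n + 1)) :
    B n (rmul k A _ f p) = rmul k A _ f (B n p) := by
  suffices h : B n ∘ₗ rmul k A _ f = rmul k A _ f ∘ₗ B n from LinearMap.congr_fun h p
  apply bar_ext
  intro e a g
  simp only [LinearMap.comp_apply, rmul_pt, hB n, map_add, map_sum, map_zsmul, mul_assoc]

variable {σ : A ≃ₐ[k] A} {δ : A →ₗ[k] A} {ι} {x}

lemma bar_htp_zero (hOre : IsOreExtension k A E σ δ ι x)
    (hc : ∀ b i, coef (ι b * x ^ i) = Finsupp.single i b)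
    (hB : IsBar ι τ B) (p : BarObj k A E 0) :
    B 0 (htp coef x τ 0 p) + p = sec k A x (aug coef ι τ p) := by
  suffices h : B 0 ∘ₗ htp coef x τ 0 + LinearMap.id = sec k A x ∘ₗ aug coef ι τ from
    LinearMap.congr_fun h p
  apply bar_ext_ore hOre
  intro e a b i
  simp only [LinearMap.comp_apply, LinearMap.add_apply, LinearMap.id_apply,
    htp_apply coef ι x τ hc, aug_apply coef ι x τ hc, hB 0, sec_single x i _ a]
  have h1 : (Fin.snoc (α := fun _ => A) a (τ b) : Fin 1 → A) 0 = τ b := by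
    exact Fin.snoc_last (α := fun _ => A) (τ b) a
  have h2 : ∀ c : Fin 0 → A, c = a := fun c => Subsingleton.elim _ _
  rw [h2 (fun j : Fin 0 => _), h2 (fun j : Fin 0 => _)]
  simp only [Fin.last_zero, h1, AlgEquiv.symm_apply_apply, Finset.univ_eq_empty,
    Finset.sum_empty, add_zero, zero_add, pow_one, neg_smul, one_smul]
  abel

lemma bar_htp_succ (hOre : IsOreExtension k A E σ δ ι x)
    (hc : ∀ b i, coef (ι b * x ^ i) = Finsupp.single i b)
    (hB : IsBar ι τ B) (n : ℕ) (p : BarObj k A E (n + 1)) :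
    B (n + 1) (htp coef x τ (n + 1) p) = htp coef x τ n (B n p) + ((-1 : ℤ) ^ n) • p := by
  suffices h : B (n + 1) ∘ₗ htp coef x τ (n + 1) =
      htp coef x τ n ∘ₗ B n + ((-1 : ℤ) ^ n) • LinearMap.id from
    LinearMap.congr_fun h p
  apply bar_ext_ore hOre
  intro e a b i
  simp only [LinearMap.comp_apply, LinearMap.add_apply, LinearMap.smul_apply, LinearMap.id_apply,
    htp_apply coef ι x τ hc, hB _, map_add, map_sum, map_zsmul, Fin.snoc_last,
    AlgEquiv.symm_apply_apply, Fin.snoc_castSucc]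
  rw [Fin.sum_univ_castSucc]
  have e0 : (Fin.snoc (α := fun _ => A) a (τ b) : Fin (n + 2) → A) 0 = a 0 :=
    Fin.snoc_castSucc (α := fun _ => A) (τ b) a 0
  have e1 : (fun j : Fin (n + 1) => (Fin.snoc (α := fun _ => A) a (τ b) : Fin (n + 2) → A) j.succ)
      = Fin.snoc (α := fun _ => A) (fun j : Fin n => a j.succ) (τ b) := by
    funext j
    refine Fin.lastCases ?_ (fun j => ?_) j
    · rw [Fin.succ_last, Fin.snoc_last, Fin.snoc_last]
    · rw [← Fin.castSucc_succ, Fin.snoc_castSucc, Fin.snoc_castSucc]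
  have e2 : ∀ i : Fin n, mergeAt (Fin.snoc (α := fun _ => A) a (τ b)) i.castSucc =
      Fin.snoc (α := fun _ => A) (mergeAt a i) (τ b) := by
    intro i
    funext j
    refine Fin.lastCases ?_ (fun j => ?_) j
    · have : ¬ (n < (i : ℕ)) := by omega
      have h' : ¬ (n = (i : ℕ)) := by omega
      simp [mergeAt, this, h']
    · simp only [mergeAt, Fin.snoc_castSucc, Fin.val_castSucc, Fin.succ_castSucc]
  have e3 : mergeAt (Fin.snoc (α := fun _ => A) a (τ b)) (Fin.last n) =
      Fin.snoc (α := fun _ => A) (fun j : Fin n => a j.castSucc) (a (Fin.last n) * τ b) := by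
    funext j
    refine Fin.lastCases ?_ (fun j => ?_) j
    · simp only [mergeAt, Fin.snoc_last, lt_irrefl, if_false, if_true, Fin.snoc_castSucc,
        Fin.succ_last]
    · have : (j : ℕ) < n := j.2
      simp only [mergeAt, Fin.snoc_castSucc, Fin.val_castSucc, Fin.val_last, this, if_true]
  have e4 : ι (τ.symm (a (Fin.last n))) * (ι b * x ^ i) =
      ι (τ.symm (a (Fin.last n)) * b) * x ^ i := by
    rw [map_mul, mul_assoc]
  rw [e4, htp_apply coef ι x τ hc, map_mul, AlgEquiv.apply_symm_apply, e0, e1, e3]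
  simp only [e2, Fin.val_castSucc, Fin.val_last]
  rw [pow_succ (-1 : ℤ) (n + 1), pow_succ (-1 : ℤ) n]
  simp only [mul_neg, mul_one, neg_neg]
  abel

lemma aug_bar (hOre : IsOreExtension k A E σ δ ι x)
    (hc : ∀ b i, coef (ι b * x ^ i) = Finsupp.single i b)
    (hB : IsBar ι τ B) (p : BarObj k A E 1) :
    aug coef ι τ (B 0 p) = 0 := by
  suffices h : aug coef ι τ ∘ₗ B 0 = 0 from LinearMap.congr_fun h p
  apply bar_ext_ore hOre
  intro e a b i
  have e4 : ι (τ.symm (a 0)) * (ι b * x ^ i) = ι (τ.symm (a 0) * b) * x ^ i := by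
    rw [map_mul, mul_assoc]
  have h0 : (a (Fin.last 0)) = a 0 := rfl
  rw [LinearMap.comp_apply, hB 0, h0, e4, map_add, map_add, map_zsmul,
    aug_apply coef ι x τ hc, aug_apply coef ι x τ hc, map_mul τ, AlgEquiv.apply_symm_apply,
    map_mul ι, mul_assoc]
  simp

lemma aug_sec (hc : ∀ b i, coef (ι b * x ^ i) = Finsupp.single i b) (g : ℕ →₀ E) :
    aug coef ι τ (sec k A x g) = g := by
  suffices h : aug coef ι τ ∘ₗ sec k A x = LinearMap.id from LinearMap.congr_fun h g
  apply Finsupp.lhom_ext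
  intro i e
  have h1 : x ^ i = ι 1 * x ^ i := by rw [map_one, one_mul]
  rw [LinearMap.comp_apply, sec_single x i e Fin.elim0, h1, aug_apply coef ι x τ hc]
  simp

lemma bar_bar (hOre : IsOreExtension k A E σ δ ι x)
    (hc : ∀ b i, coef (ι b * x ^ i) = Finsupp.single i b)
    (hB : IsBar ι τ B) (n : ℕ) : ∀ p, B n (B (n + 1) p) = 0 := by
  have key : ∀ n : ℕ, (∀ p, B n (B (n + 1) (htp coef x τ (n + 1) p)) = 0) →
      ∀ p, B n (B (n + 1) p) = 0 := by
    intro n h p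
    have := eq_of_comp_htp coef ι x τ hc (B n ∘ₗ B (n + 1)) 0
      (fun f p => by simp only [LinearMap.comp_apply, bar_rmul ι τ hB])
      (fun f p => by simp only [LinearMap.zero_apply, map_zero])
      (fun p => by simpa only [LinearMap.comp_apply, LinearMap.zero_apply] using h p)
    exact LinearMap.congr_fun this p
  induction n with
  | zero =>
    apply key
    intro p
    have h := bar_htp_zero coef τ hOre hc hB (B 0 p)
    rw [aug_bar coef τ hOre hc hB, map_zero] at h
    rw [bar_htp_succ coef τ hOre hc hB, map_add, map_zsmul, pow_zero, one_smul]
    exact h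
  | succ n ih =>
    apply key
    intro p
    rw [bar_htp_succ coef τ hOre hc hB, map_add, map_zsmul, bar_htp_succ coef τ hOre hc hB, ih,
      map_zero, zero_add, pow_succ]
    simp

lemma bar_exact (hOre : IsOreExtension k A E σ δ ι x)
    (hc : ∀ b i, coef (ι b * x ^ i) = Finsupp.single i b)
    (hB : IsBar ι τ B) (n : ℕ) (p : BarObj k A E (n + 1)) (hp : B n p = 0) :
    ∃ q, B (n + 1) q = p := by
  refine ⟨((-1 : ℤ) ^ n) • htp coef x τ (n + 1) p, ?_⟩
  rw [map_zsmul, bar_htp_succ coef τ hOre hc hB, hp, map_zero, zero_add, smul_smul, ← mul_pow]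
  simp

lemma bar_exact_zero (hOre : IsOreExtension k A E σ δ ι x)
    (hc : ∀ b i, coef (ι b * x ^ i) = Finsupp.single i b)
    (hB : IsBar ι τ B) (p : BarObj k A E 0) (hp : aug coef ι τ p = 0) :
    ∃ q, B 0 q = p := by
  have h := bar_htp_zero coef τ hOre hc hB p
  rw [hp, map_zero] at h
  refine ⟨- htp coef x τ 0 p, ?_⟩
  rw [map_neg]
  exact neg_eq_of_add_eq_zero_right h

end twisted

section psi

variable {σ : A ≃ₐ[k] A} {δ : A →ₗ[k] A} {ι : A →ₐ[k] E} {x : E}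
  (coef : E →ₗ[k] ℕ →₀ A)

/-- The terms of the last sum in the definition of `Ψ`. -/
def psiTerm (σ : A ≃ₐ[k] A) (δ : A →ₗ[k] A) {n : ℕ} (a : Fin n → A) (j : Fin n) : Fin n → A :=
  fun i : Fin n =>
    if (i : ℕ) < (j : ℕ) then a i
    else if i = j then δ (σ.symm (a j))
    else σ.symm (a i)

/-- The formula defining `Ψ`. -/
def IsPsi (σ : A ≃ₐ[k] A) (δ : A →ₗ[k] A) (x : E)
    (Ψ : (n : ℕ) → (BarObj k A E n →ₗ[k] BarObj k A E n)) : Prop :=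
  ∀ (n : ℕ) (e f : E) (a : Fin n → A),
      Ψ n (pt k e a f) =
        pt k (e * x) (fun i : Fin n => σ.symm (a i)) f
        - pt k e a (x * f)
        - ∑ j : Fin n, pt k e (psiTerm σ δ a j) f

variable {Ψ : (n : ℕ) → (BarObj k A E n →ₗ[k] BarObj k A E n)}

lemma psi_rmul (hΨ : IsPsi σ δ x Ψ) (n : ℕ) (f : E) (p : BarObj k A E n) :
    Ψ n (rmul k A _ f p) = rmul k A _ f (Ψ n p) := by
  suffices h : Ψ n ∘ₗ rmul k A _ f = rmul k A _ f ∘ₗ Ψ n from LinearMap.congr_fun h p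
  apply bar_ext
  intro e a g
  simp only [LinearMap.comp_apply, rmul_pt, hΨ n, map_sub, map_sum, mul_assoc]

lemma x_mul (hOre : IsOreExtension k A E σ δ ι x) (b : A) (i : ℕ) :
    x * (ι b * x ^ i) = ι (σ b) * x ^ (i + 1) + ι (δ b) * x ^ i := by
  rw [← mul_assoc, hOre.commRule, add_mul, mul_assoc, ← pow_succ']

lemma psi_htp (hOre : IsOreExtension k A E σ δ ι x)
    (hc : ∀ b i, coef (ι b * x ^ i) = Finsupp.single i b)
    (hΨ : IsPsi σ δ x Ψ) (n : ℕ) (p : BarObj k A E n) :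
    Ψ (n + 1) (htp coef x σ n p) = htp coef x AlgEquiv.refl n (Ψ n p) := by
  suffices h : Ψ (n + 1) ∘ₗ htp coef x σ n = htp coef x AlgEquiv.refl n ∘ₗ Ψ n from
    LinearMap.congr_fun h p
  apply bar_ext_ore hOre
  intro e a b i
  simp only [LinearMap.comp_apply, hΨ _, map_sub, map_sum, x_mul hOre, pt_add_right, map_add,
    htp_apply coef ι x _ hc, AlgEquiv.coe_refl, id_eq]
  rw [Fin.sum_univ_castSucc, ← pow_succ']
  have e1 : (fun i : Fin (n + 1) => σ.symm ((Fin.snoc (α := fun _ => A) a (σ b) :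
      Fin (n + 1) → A) i)) = Fin.snoc (α := fun _ => A) (fun i : Fin n => σ.symm (a i)) b := by
    funext j
    refine Fin.lastCases ?_ (fun j => ?_) j
    · simp
    · simp
  have e2 : ∀ j : Fin n, psiTerm σ δ (Fin.snoc (α := fun _ => A) a (σ b)) j.castSucc =
      Fin.snoc (α := fun _ => A) (psiTerm σ δ a j) b := by
    intro j
    funext l
    refine Fin.lastCases ?_ (fun l => ?_) l
    · have h1 : ¬ (n < (j : ℕ)) := by omega
      have h2 : ¬ (Fin.last n = j.castSucc) := (Fin.castSucc_lt_last j).ne'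
      simp [psiTerm, h1, h2]
    · simp [psiTerm]
  have e3 : psiTerm σ δ (Fin.snoc (α := fun _ => A) a (σ b)) (Fin.last n) =
      Fin.snoc (α := fun _ => A) a (δ b) := by
    funext l
    refine Fin.lastCases ?_ (fun l => ?_) l
    · simp [psiTerm]
    · simp [psiTerm]
  rw [e1, e3]
  simp only [e2]
  abel

lemma psi_sec (hΨ : IsPsi σ δ x Ψ) (g : ℕ →₀ E) :
    Ψ 0 (sec k A x g) = sec k A x (psiM k x g) := by
  suffices h : Ψ 0 ∘ₗ sec k A x = sec k A x ∘ₗ psiM k x from LinearMap.congr_fun h g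
  apply Finsupp.lhom_ext
  intro i e
  have h2 : ∀ c : Fin 0 → A, c = Fin.elim0 := fun c => Subsingleton.elim _ _
  simp only [LinearMap.comp_apply, psiM_single, map_sub, sec_single x _ _ Fin.elim0, hΨ 0]
  rw [h2 (fun j : Fin 0 => _), ← pow_succ']
  simp

lemma aug_psi (hOre : IsOreExtension k A E σ δ ι x)
    (hc : ∀ b i, coef (ι b * x ^ i) = Finsupp.single i b)
    (hΨ : IsPsi σ δ x Ψ) (p : BarObj k A E 0) :
    aug coef ι AlgEquiv.refl (Ψ 0 p) = psiM k x (aug coef ι σ p) := by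
  suffices h : aug coef ι AlgEquiv.refl ∘ₗ Ψ 0 = psiM k x ∘ₗ aug coef ι σ from
    LinearMap.congr_fun h p
  apply bar_ext_ore hOre
  intro e a b i
  simp only [LinearMap.comp_apply, hΨ _, map_sub, map_sum, x_mul hOre, pt_add_right, map_add,
    aug_apply coef ι x _ hc, psiM_single, AlgEquiv.coe_refl, id_eq, Finset.univ_eq_empty,
    Finset.sum_empty, sub_zero, map_zero]
  rw [mul_assoc, hOre.commRule, mul_add, Finsupp.single_add, mul_assoc]
  abel

lemma psi_chain (hOre : IsOreExtension k A E σ δ ι x)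
    (hc : ∀ b i, coef (ι b * x ^ i) = Finsupp.single i b)
    (hΨ : IsPsi σ δ x Ψ)
    {B0 B1 : (n : ℕ) → (BarObj k A E (n + 1) →ₗ[k] BarObj k A E n)}
    (hB0 : IsBar ι AlgEquiv.refl B0) (hB1 : IsBar ι σ B1) (n : ℕ) :
    ∀ p, B0 n (Ψ (n + 1) p) = Ψ n (B1 n p) := by
  have key : ∀ n : ℕ, (∀ p, B0 n (Ψ (n + 1) (htp coef x σ n p)) = Ψ n (B1 n (htp coef x σ n p))) →
      ∀ p, B0 n (Ψ (n + 1) p) = Ψ n (B1 n p) := by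
    intro n h p
    have := eq_of_comp_htp coef ι x σ hc (B0 n ∘ₗ Ψ (n + 1)) (Ψ n ∘ₗ B1 n)
      (fun f p => by simp only [LinearMap.comp_apply, bar_rmul ι _ hB0, psi_rmul hΨ])
      (fun f p => by simp only [LinearMap.comp_apply, bar_rmul ι _ hB1, psi_rmul hΨ])
      (fun p => by simpa only [LinearMap.comp_apply] using h p)
    exact LinearMap.congr_fun this p
  induction n with
  | zero =>
    apply key
    intro p
    have h1 := bar_htp_zero coef _ hOre hc hB0 (Ψ 0 p)
    have h2 := congrArg (Ψ 0) (bar_htp_zero coef _ hOre hc hB1 p)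
    rw [aug_psi coef hOre hc hΨ, ← psi_sec hΨ, ← h2, map_add] at h1
    rw [psi_htp coef hOre hc hΨ]
    exact add_right_cancel h1
  | succ n ih =>
    apply key
    intro p
    rw [psi_htp coef hOre hc hΨ, bar_htp_succ coef _ hOre hc hB0, ih, ← psi_htp coef hOre hc hΨ,
      bar_htp_succ coef _ hOre hc hB1, map_add, map_zsmul]

lemma psiM_apply_succ (x : E) (g : ℕ →₀ E) (i : ℕ) :
    psiM k x g (i + 1) = g (i + 1) * x - g i := by
  induction g using Finsupp.induction_linear with
  | zero => simp
  | add u v hu hv =>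
    rw [map_add (psiM k x), Finsupp.add_apply, Finsupp.add_apply, Finsupp.add_apply, hu, hv, add_mul]
    abel
  | single j e =>
    rw [psiM_single, Finsupp.sub_apply]
    simp only [Finsupp.single_apply, add_left_inj]
    by_cases h : j = i + 1
    · simp [h]
    · simp [h]

lemma psiM_inj (x : E) (g : ℕ →₀ E) (h : psiM k x g = 0) : g = 0 := by
  have h1 : ∀ i, g i = g (i + 1) * x := by
    intro i
    have := psiM_apply_succ (k := k) x g i
    rw [h, Finsupp.zero_apply] at this
    exact (sub_eq_zero.1 this.symm).symm
  obtain ⟨N, hN⟩ := g.support.exists_nat_subset_range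
  have h2 : ∀ m i, N ≤ i + m → g i = 0 := by
    intro m
    induction m with
    | zero =>
      intro i hi
      by_contra hne
      have := hN (Finsupp.mem_support_iff.2 hne)
      rw [Finset.mem_range] at this
      omega
    | succ m ih =>
      intro i hi
      rw [h1, ih (i + 1) (by omega), zero_mul]
  ext i
  exact h2 N i (by omega)

lemma psiM_coker (x : E) (g : ℕ →₀ E) :
    ∃ g', g = psiM k x g' + Finsupp.single 0 (g.sum fun i e => e * x ^ i) := by
  induction g using Finsupp.induction_linear with
  | zero => exact ⟨0, by simp⟩
  | add u v hu hv =>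
    obtain ⟨u', hu⟩ := hu
    obtain ⟨v', hv⟩ := hv
    refine ⟨u' + v', ?_⟩
    rw [Finsupp.sum_add_index' (by simp) (by simp [add_mul]), map_add, Finsupp.single_add]
    nth_rw 1 [hu, hv]
    abel
  | single i e =>
    induction i generalizing e with
    | zero => exact ⟨0, by simp⟩
    | succ i ih =>
      obtain ⟨u, hu⟩ := ih (e * x)
      refine ⟨u - Finsupp.single i e, ?_⟩
      have h2 : ((Finsupp.single (i + 1) e).sum fun i e => e * x ^ i) =
          ((Finsupp.single i (e * x)).sum fun i e => e * x ^ i) := by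
        rw [Finsupp.sum_single_index (by simp), Finsupp.sum_single_index (by simp), mul_assoc,
          pow_succ']
      rw [map_sub, psiM_single, h2]
      rw [sub_add_eq_add_sub, ← hu]
      abel

lemma main_exact (hOre : IsOreExtension k A E σ δ ι x)
    (B0 B1 : (n : ℕ) → (BarObj k A E (n + 1) →ₗ[k] BarObj k A E n))
    (hΨ : IsPsi σ δ x Ψ)
    (hB0 : IsBar ι AlgEquiv.refl B0) (hB1 : IsBar ι σ B1)
    (μ : BarObj k A E 0 →ₗ[k] E)
    (d1 : BarObj k A E 0 × BarObj k A E 1 →ₗ[k] BarObj k A E 0)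
    (d : (n : ℕ) →
      (BarObj k A E (n + 1) × BarObj k A E (n + 2) →ₗ[k]
        BarObj k A E n × BarObj k A E (n + 1)))
    (hμ : ∀ (e f : E) (a : Fin 0 → A), μ (pt k e a f) = e * f)
    (hd1 : ∀ (p : BarObj k A E 0) (p' : BarObj k A E 1), d1 (p, p') = B0 0 p' - Ψ 0 p)
    (hd : ∀ (n : ℕ) (p : BarObj k A E (n + 1)) (p' : BarObj k A E (n + 2)),
      d n (p, p') = (-(B1 n p), B0 (n + 1) p' - Ψ (n + 1) p)) :
    Function.Surjective ⇑μ ∧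
      Function.Exact ⇑d1 ⇑μ ∧
      Function.Exact ⇑(d 0) ⇑d1 ∧
      (∀ n : ℕ, Function.Exact ⇑(d (n + 1)) ⇑(d n)) := by
  obtain ⟨coef, hc⟩ : ∃ coef : E →ₗ[k] ℕ →₀ A,
      ∀ b i, coef (ι b * x ^ i) = Finsupp.single i b := by
    let T : (ℕ →₀ A) →ₗ[k] E :=
      Finsupp.lsum k (fun i => LinearMap.mulRight k (x ^ i) ∘ₗ ι.toLinearMap)
    have hT : ∀ c, T c = c.sum fun i a => ι a * x ^ i := fun c => rfl
    have hb : Function.Bijective T := by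
      constructor
      · rw [injective_iff_map_eq_zero]
        intro c h
        exact hOre.indep c (by rw [← hT, h])
      · intro e
        obtain ⟨c, h⟩ := hOre.spans e
        exact ⟨c, by rw [hT, h]⟩
    refine ⟨(LinearEquiv.ofBijective T hb).symm.toLinearMap, fun b i => ?_⟩
    rw [LinearEquiv.coe_coe, LinearEquiv.symm_apply_eq, LinearEquiv.ofBijective_apply, hT]
    simp
  have hμaug : ∀ p, μ p = (aug coef ι AlgEquiv.refl p).sum fun i e => e * x ^ i := by
    intro p
    let M : (ℕ →₀ E) →ₗ[k] E := Finsupp.lsum k (fun i => LinearMap.mulRight k (x ^ i))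
    have hM : ∀ c, M c = c.sum fun i e => e * x ^ i := fun c => rfl
    rw [← hM]
    suffices h : μ = M ∘ₗ aug coef ι AlgEquiv.refl from LinearMap.congr_fun h p
    apply bar_ext_ore hOre
    intro e a b i
    rw [LinearMap.comp_apply, hμ, aug_apply coef ι x _ hc, hM,
      Finsupp.sum_single_index (by simp), mul_assoc]
    rfl
  have hch := psi_chain coef hOre hc hΨ hB0 hB1
  refine ⟨fun e => ⟨pt k e Fin.elim0 1, by rw [hμ, mul_one]⟩, ?_, ?_, ?_⟩
  · intro z
    constructor
    · intro hz
      obtain ⟨g, hg⟩ := psiM_coker (k := k) x (aug coef ι AlgEquiv.refl z)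
      rw [← hμaug, hz, Finsupp.single_zero, add_zero, ← aug_sec (A := A) coef σ hc g,
        ← aug_psi coef hOre hc hΨ] at hg
      obtain ⟨q, hq⟩ := bar_exact_zero coef _ hOre hc hB0 (z - Ψ 0 (sec k A x g))
        (by rw [map_sub, hg, sub_self])
      refine ⟨(-sec k A x g, q), ?_⟩
      rw [hd1, hq, map_neg]
      abel
    · rintro ⟨⟨p, p'⟩, rfl⟩
      have h1 : μ (B0 0 p') = 0 := by
        rw [hμaug, aug_bar coef _ hOre hc hB0, Finsupp.sum_zero_index]
      have h2 : μ (Ψ 0 p) = 0 := by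
        suffices h : μ ∘ₗ Ψ 0 = 0 from LinearMap.congr_fun h p
        apply bar_ext
        intro e a f
        rw [LinearMap.comp_apply, hΨ, map_sub, map_sub, hμ, hμ]
        simp [mul_assoc]
      rw [hd1, map_sub, h1, h2, sub_zero]
  · rintro ⟨p, p'⟩
    constructor
    · intro h
      rw [hd1, sub_eq_zero] at h
      have h3 : aug coef ι σ p = 0 := by
        apply psiM_inj (k := k) x
        rw [← aug_psi coef hOre hc hΨ, ← h, aug_bar coef _ hOre hc hB0]
      obtain ⟨q, hq⟩ := bar_exact_zero coef _ hOre hc hB1 p h3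
      obtain ⟨q', hq'⟩ := bar_exact coef _ hOre hc hB0 0 (p' - Ψ 1 q)
        (by rw [map_sub, hch, hq, h, sub_self])
      refine ⟨(-q, q'), ?_⟩
      rw [hd, map_neg, map_neg, neg_neg, hq, hq', sub_neg_eq_add, sub_add_cancel]
    · rintro ⟨⟨q, q'⟩, hq⟩
      rw [← hq, hd, hd1, map_sub, bar_bar coef _ hOre hc hB0, hch, map_neg]
      abel
  · intro n
    rintro ⟨p, p'⟩
    constructor
    · intro h
      rw [hd, Prod.mk_eq_zero, neg_eq_zero, sub_eq_zero] at h
      obtain ⟨q, hq⟩ := bar_exact coef _ hOre hc hB1 n p h.1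
      obtain ⟨q', hq'⟩ := bar_exact coef _ hOre hc hB0 (n + 1) (p' - Ψ (n + 2) q)
        (by rw [map_sub, hch, hq, h.2, sub_self])
      refine ⟨(-q, q'), ?_⟩
      rw [hd, map_neg, map_neg, neg_neg, hq, hq', sub_neg_eq_add, sub_add_cancel]
    · rintro ⟨⟨q, q'⟩, hq⟩
      rw [← hq, hd, hd, map_sub, bar_bar coef _ hOre hc hB0, hch, map_neg, map_neg,
        bar_bar coef _ hOre hc hB1, neg_zero, neg_zero, zero_sub, sub_neg_eq_add, neg_add_cancel]
      rfl

end psi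

end Helpers

section Proj

lemma proj_tensorPower (k : Type) [CommRing k] (A : Type) [Ring A] [Algebra k A]
    (h : Module.Projective k A) (n : ℕ) : Module.Projective k (TensorPower k n A) := by
  induction n with
  | zero =>
    exact Module.Projective.of_equiv'
      (PiTensorProduct.isEmptyEquiv (R := k) (s := fun _ => A) (Fin 0)).symm
  | succ n ih =>
    have h1 : Module.Projective k (TensorPower k 1 A) := Module.Projective.of_equiv'
      (PiTensorProduct.subsingletonEquiv (R := k) (s := fun _ => A) (0 : Fin 1)).symm
    exact Module.Projective.of_equiv' (TensorPower.mulEquiv (R := k) (M := A) (n := n) (m := 1))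

lemma proj_triple (k : Type) [CommRing k] (E : Type) [Ring E] [Algebra k E]
    (X : Type) [AddCommGroup X] [Module k X] (h : Module.Projective k X) :
    @Module.Projective (E ⊗[k] Eᵐᵒᵖ) _ ((E ⊗[k] X) ⊗[k] E) _ (tripleModule k E X) := by
  letI := tripleModule k E X
  let e0 : (E ⊗[k] Eᵐᵒᵖ) ⊗[k] X ≃ₗ[k] (E ⊗[k] X) ⊗[k] E :=
    (TensorProduct.rightComm k E Eᵐᵒᵖ X).trans
      (LinearEquiv.lTensor (E ⊗[k] X) (MulOpposite.opLinearEquiv k).symm)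
  have h0 : ∀ e z y, e0 ((e ⊗ₜ z) ⊗ₜ y) = (e ⊗ₜ y) ⊗ₜ z.unop := by
    intro e z y
    rfl
  have h1 : ∀ (c : E ⊗[k] Eᵐᵒᵖ) (t : (E ⊗[k] Eᵐᵒᵖ) ⊗[k] X), e0 (c • t) = c • e0 t := by
    intro c t
    induction t using TensorProduct.induction_on with
    | zero => simp
    | add u v hu hv => rw [smul_add, map_add, map_add, smul_add, hu, hv]
    | tmul w y =>
      induction w using TensorProduct.induction_on with
      | zero => simp
      | add u v hu hv => rw [TensorProduct.add_tmul, smul_add, map_add, map_add, smul_add, hu, hv]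
      | tmul e z =>
        induction c using TensorProduct.induction_on with
        | zero =>
          have z1 : (0 : E ⊗[k] Eᵐᵒᵖ) • ((e ⊗ₜ[k] z) ⊗ₜ[k] y : (E ⊗[k] Eᵐᵒᵖ) ⊗[k] X) = 0 := by
            rw [TensorProduct.smul_tmul', smul_eq_mul]
            exact (congrArg (fun w => w ⊗ₜ[k] y) (zero_mul (e ⊗ₜ[k] z))).trans
              (TensorProduct.zero_tmul _ _)
          have z2 : (0 : E ⊗[k] Eᵐᵒᵖ) • e0 ((e ⊗ₜ[k] z) ⊗ₜ[k] y) = 0 :=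
            (tripleModule k E X).zero_smul _
          exact (congrArg e0 z1).trans ((map_zero e0).trans z2.symm)
        | add u v hu hv => rw [add_smul, map_add, add_smul, hu, hv]
        | tmul e' z' =>
          rw [h0, TensorProduct.smul_tmul', smul_eq_mul, Algebra.TensorProduct.tmul_mul_tmul, h0]
          change _ = (lAlgHom k E X e' * rAlgHom k E X z') ((e ⊗ₜ y) ⊗ₜ z.unop)
          simp [lAlgHom, rAlgHom]
  exact Module.Projective.of_equiv'
    ({ e0 with map_smul' := h1 } : ((E ⊗[k] Eᵐᵒᵖ) ⊗[k] X) ≃ₗ[E ⊗[k] Eᵐᵒᵖ] ((E ⊗[k] X) ⊗[k] E))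

end Proj

/-- **The Guccione–Guccione resolution of an Ore extension.**
Let `E = A[x;σ,δ]` be an Ore extension with `σ` an automorphism, `b'₀`, `b'₁` the two
bar-type differentials, `ψ'` the Guccione–Guccione chain map, `μ` the multiplication, and
`d` the differential of the mapping cone of `ψ'` (all specified by their values on pure
tensors; the cone has terms `C₀ = E ⊗ E` and `Cₙ = (E ⊗ A^{⊗(n-1)} ⊗ {}^{σ⁻¹}E) ⊕
(E ⊗ A^{⊗n} ⊗ E)` for `n ≥ 1`, with `d(p, p') = (−b'₁(p), b'₀(p') − ψ'(p))`).
Then the augmented complex `⋯ → C₁ → C₀ → E → 0` is exact; and if moreover `A` is projective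
as a `k`-module, each term is a projective `E ⊗ Eᵒᵖ`-module (with the outer structure), i.e.
the cone is a projective resolution of `E` by `E ⊗ Eᵒᵖ`-modules. -/
theorem ore_extension_cone_resolution
    (k : Type) [CommRing k] (A : Type) [Ring A] [Algebra k A]
    (E : Type) [Ring E] [Algebra k E]
    (σ : A ≃ₐ[k] A) (δ : A →ₗ[k] A) (ι : A →ₐ[k] E) (x : E)
    (hOre : IsOreExtension k A E σ δ ι x)
    (B0 B1 : (n : ℕ) → (BarObj k A E (n + 1) →ₗ[k] BarObj k A E n))
    (Ψ : (n : ℕ) → (BarObj k A E n →ₗ[k] BarObj k A E n))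
    (μ : BarObj k A E 0 →ₗ[k] E)
    (d1 : BarObj k A E 0 × BarObj k A E 1 →ₗ[k] BarObj k A E 0)
    (d : (n : ℕ) →
      (BarObj k A E (n + 1) × BarObj k A E (n + 2) →ₗ[k]
        BarObj k A E n × BarObj k A E (n + 1)))
    (hB0 : ∀ (n : ℕ) (e f : E) (a : Fin (n + 1) → A),
      B0 n ((e ⊗ₜ[k] PiTensorProduct.tprod k a) ⊗ₜ[k] f) =
        ((e * ι (a 0)) ⊗ₜ[k] PiTensorProduct.tprod k (fun j : Fin n => a j.succ)) ⊗ₜ[k] f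
        + ∑ i : Fin n, ((-1 : ℤ) ^ ((i : ℕ) + 1)) •
            ((e ⊗ₜ[k] PiTensorProduct.tprod k (mergeAt a i)) ⊗ₜ[k] f)
        + ((-1 : ℤ) ^ (n + 1)) •
            ((e ⊗ₜ[k] PiTensorProduct.tprod k (fun j : Fin n => a j.castSucc)) ⊗ₜ[k]
              (ι (a (Fin.last n)) * f)))
    (hB1 : ∀ (n : ℕ) (e f : E) (a : Fin (n + 1) → A),
      B1 n ((e ⊗ₜ[k] PiTensorProduct.tprod k a) ⊗ₜ[k] f) =
        ((e * ι (a 0)) ⊗ₜ[k] PiTensorProduct.tprod k (fun j : Fin n => a j.succ)) ⊗ₜ[k] f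
        + ∑ i : Fin n, ((-1 : ℤ) ^ ((i : ℕ) + 1)) •
            ((e ⊗ₜ[k] PiTensorProduct.tprod k (mergeAt a i)) ⊗ₜ[k] f)
        + ((-1 : ℤ) ^ (n + 1)) •
            ((e ⊗ₜ[k] PiTensorProduct.tprod k (fun j : Fin n => a j.castSucc)) ⊗ₜ[k]
              (ι (σ.symm (a (Fin.last n))) * f)))
    (hΨ : ∀ (n : ℕ) (e f : E) (a : Fin n → A),
      Ψ n ((e ⊗ₜ[k] PiTensorProduct.tprod k a) ⊗ₜ[k] f) =
        ((e * x) ⊗ₜ[k] PiTensorProduct.tprod k (fun i : Fin n => σ.symm (a i))) ⊗ₜ[k] f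
        - (e ⊗ₜ[k] PiTensorProduct.tprod k a) ⊗ₜ[k] (x * f)
        - ∑ j : Fin n, (e ⊗ₜ[k] PiTensorProduct.tprod k (fun i : Fin n =>
            if (i : ℕ) < (j : ℕ) then a i
            else if i = j then δ (σ.symm (a j))
            else σ.symm (a i))) ⊗ₜ[k] f)
    (hμ : ∀ (e f : E) (a : Fin 0 → A),
      μ ((e ⊗ₜ[k] PiTensorProduct.tprod k a) ⊗ₜ[k] f) = e * f)
    (hd1 : ∀ (p : BarObj k A E 0) (p' : BarObj k A E 1),
      d1 (p, p') = B0 0 p' - Ψ 0 p)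
    (hd : ∀ (n : ℕ) (p : BarObj k A E (n + 1)) (p' : BarObj k A E (n + 2)),
      d n (p, p') = (-(B1 n p), B0 (n + 1) p' - Ψ (n + 1) p)) :
    Function.Surjective ⇑μ ∧
      Function.Exact ⇑d1 ⇑μ ∧
      Function.Exact ⇑(d 0) ⇑d1 ∧
      (∀ n : ℕ, Function.Exact ⇑(d (n + 1)) ⇑(d n)) ∧
      (Module.Projective k A →
        ∀ n : ℕ,
          @Module.Projective (E ⊗[k] Eᵐᵒᵖ) _ (BarObj k A E n) _
            (tripleModule k E (TensorPower k n A))) := by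
  obtain ⟨h1, h2, h3, h4⟩ := main_exact hOre B0 B1 (Ψ := Ψ) hΨ hB0 hB1 μ d1 d hμ hd1 hd
  exact ⟨h1, h2, h3, h4, fun hA n => proj_triple k E _ (proj_tensorPower k A hA n)⟩
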